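/- Let d ≥ 2 and let F be a smooth function on the standard unit sphere 𝕊^{d−1} ⊂ ℝ^d with ∫_{𝕊^{d−1}} F = 0. Then 0 ≤ ‖ΔF + (d−1)F‖² − (d+1)⟨F, −ΔF − (d−1)F⟩, where Δ is the spherical Laplacian, ⟨·,·⟩ is the L² inner product on 𝕊^{d−1} and ‖·‖ the associated L² norm. -/

import Mathlib

open MeasureTheory Real
open scoped RealInnerProductSpace Pointwise

noncomputable section

/-- The surface (area) measure on the unit sphere `𝕊^{d-1} ⊂ ℝ^d`. -/
def sphMeasure (d : ℕ) : Measure (Metric.sphere (0 : EuclideanSpace ℝ (Fin d)) 1) :=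
  (volume : Measure (EuclideanSpace ℝ (Fin d))).toSphere

/-- The degree-zero homogeneous extension of a function on the unit sphere to `ℝ^d`
(extended by `0` at the origin). -/
def ext0 {d : ℕ} (F : Metric.sphere (0 : EuclideanSpace ℝ (Fin d)) 1 → ℝ)
    (x : EuclideanSpace ℝ (Fin d)) : ℝ :=
  letI := Classical.dec (x = 0)
  if hx : x = 0 then 0
  else F ⟨‖x‖⁻¹ • x, by
    simp [mem_sphere_zero_iff_norm, norm_smul, abs_of_nonneg, inv_mul_cancel₀,
      norm_ne_zero_iff.mpr hx]⟩

/-- The Euclidean Laplacian of `f : ℝ^d → ℝ`. -/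
def eucLap {d : ℕ} (f : EuclideanSpace ℝ (Fin d) → ℝ) (x : EuclideanSpace ℝ (Fin d)) : ℝ :=
  ∑ i, fderiv ℝ (fun y => fderiv ℝ f y (EuclideanSpace.single i 1)) x (EuclideanSpace.single i 1)

/-- The Laplace–Beltrami operator (spherical Laplacian) on the unit sphere `𝕊^{d-1}`:
for `F : 𝕊^{d-1} → ℝ`, `sphLap F` is the restriction to the sphere of the Euclidean
Laplacian of the degree-zero homogeneous extension of `F`.  (This is the standard
characterization of the spherical Laplacian.) -/
def sphLap {d : ℕ} (F : Metric.sphere (0 : EuclideanSpace ℝ (Fin d)) 1 → ℝ) :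
    Metric.sphere (0 : EuclideanSpace ℝ (Fin d)) 1 → ℝ :=
  fun θ => eucLap (ext0 F) θ.val

/-- A function on the unit sphere is smooth iff its degree-zero homogeneous extension is
smooth away from the origin. -/
def SphSmooth {d : ℕ} (F : Metric.sphere (0 : EuclideanSpace ℝ (Fin d)) 1 → ℝ) : Prop :=
  ContDiffOn ℝ (⊤ : ℕ∞) (ext0 F) {(0 : EuclideanSpace ℝ (Fin d))}ᶜ

/-!
The eigenvalues `λ_1 = d - 1` and `λ_2 = 2 d` of `-Δ` are consecutive, so `(λ - λ_1)(λ - λ_2) ≥ 0`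
at every eigenvalue `λ`, and the right-hand side of the inequality is `⟨(Δ + λ_1)F, (Δ + λ_2)F⟩`.

Instead of a basis of spherical harmonics we use the filtration `V_n` of polynomials of degree
`< n` restricted to the sphere. On a homogeneous polynomial of degree `n`, `Δ + λ_n` is the
restriction of the Euclidean Laplacian, so `Δ + λ_n` maps `V_{n+1}` into `V_n`. Since `Δ` is
symmetric, it acts as `-λ_n` on the orthogonal complement of `V_n` in `V_{n+1}`. This gives the
inequality on each `V_n`; as `Δ` commutes with the orthogonal projections onto the `V_n`, whose
union is dense by Stone-Weierstrass, it passes to the limit for every smooth `F`.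

The symmetry of `Δ` follows from the Euclidean Green identity for `φ(|x|²) F(x/|x|)` and
`φ(|x|²) G(x/|x|)` with a radial cutoff `φ` vanishing near `0`: the radial terms cancel, and polar
coordinates leave a positive multiple of `∫ (F ΔG - G ΔF)` over the sphere.
-/

section SymmetricTriangular

variable {S H : Type*} [AddCommGroup S] [Module ℝ S] [NormedAddCommGroup H]
  [InnerProductSpace ℝ H] {ι : S →ₗ[ℝ] H} {T : S →ₗ[ℝ] S} {V : ℕ → Submodule ℝ S} {c : ℕ → ℝ}

theorem inner_add_smul_add_smul_of_inner_eq_zero {x y z : H} (hx : ⟪x, z⟫ = 0) (hy : ⟪y, z⟫ = 0)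
    (r s : ℝ) : ⟪x + r • z, y + s • z⟫ = ⟪x, y⟫ + r * s * ⟪z, z⟫ := by
  rw [inner_add_left, inner_add_right, inner_add_right, real_inner_smul_left,
    real_inner_smul_left, real_inner_smul_right, real_inner_smul_right, hx, real_inner_comm y z, hy]
  ring

theorem apply_mem_of_apply_add_smul_mem (hV₀ : V 0 = ⊥) (hV : Monotone V)
    (hTV : ∀ n, ∀ v ∈ V (n + 1), T v + c n • v ∈ V n) {n : ℕ} {v : S} (hv : v ∈ V n) :
    T v ∈ V n := by
  cases n with
  | zero =>
    rw [hV₀, Submodule.mem_bot] at hv ⊢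
    rw [hv, map_zero]
  | succ n =>
    exact ((V (n + 1)).add_mem_iff_left ((V (n + 1)).smul_mem (c n) hv)).1
      (hV n.le_succ (hTV n v hv))

theorem apply_eq_neg_smul_of_mem_orthogonal (hT : ∀ x y, ⟪ι (T x), ι y⟫ = ⟪ι x, ι (T y)⟫)
    {K : Submodule ℝ S} (hTK : ∀ w ∈ K, T w ∈ K) {r : ℝ} {v : S} (hv : T v + r • v ∈ K)
    (hvK : ι v ∈ (K.map ι)ᗮ) : ι (T v) = -(r • ι v) := by
  have h_orth : ι (T v + r • v) ∈ (K.map ι)ᗮ := by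
    rw [map_add, map_smul]
    refine add_mem ?_ (Submodule.smul_mem _ r hvK)
    rintro _ ⟨w, hw, rfl⟩
    rw [← hT]
    exact hvK _ (Submodule.mem_map_of_mem (hTK w hw))
  have h_zero : ι (T v + r • v) = 0 :=
    inner_self_eq_zero.1 (h_orth _ (Submodule.mem_map_of_mem hv))
  rwa [map_add, map_smul, add_eq_zero_iff_eq_neg] at h_zero

theorem starProjection_apply_of_symmetric (hT : ∀ x y, ⟪ι (T x), ι y⟫ = ⟪ι x, ι (T y)⟫)
    {K : Submodule ℝ S} [(K.map ι).HasOrthogonalProjection] (hTK : ∀ w ∈ K, T w ∈ K) {x w : S}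
    (hw : w ∈ K) (hwx : ι w = (K.map ι).starProjection (ι x)) :
    (K.map ι).starProjection (ι (T x)) = ι (T w) := by
  refine Submodule.eq_starProjection_of_mem_orthogonal (Submodule.mem_map_of_mem (hTK w hw)) ?_
  rintro _ ⟨u, hu, rfl⟩
  have h_orth : ι x - ι w ∈ (K.map ι)ᗮ := hwx ▸ Submodule.sub_starProjection_mem_orthogonal _
  rw [← map_sub, ← map_sub, ← hT, map_sub]
  exact h_orth _ (Submodule.mem_map_of_mem (hTK u hu))

variable [∀ n, ((V n).map ι).HasOrthogonalProjection]

theorem inner_apply_add_smul_nonneg_of_mem (hT : ∀ x y, ⟪ι (T x), ι y⟫ = ⟪ι x, ι (T y)⟫)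
    (hV₀ : V 0 = ⊥) (hV : Monotone V) (hTV : ∀ n, ∀ v ∈ V (n + 1), T v + c n • v ∈ V n)
    {a b : ℝ} (hc : ∀ n, 0 ≤ (c n - a) * (c n - b)) (n : ℕ) :
    ∀ v ∈ V n, 0 ≤ ⟪ι (T v) + a • ι v, ι (T v) + b • ι v⟫ := by
  induction n with
  | zero =>
    intro v hv
    rw [hV₀, Submodule.mem_bot] at hv
    simp [hv]
  | succ n ih =>
    intro v hv
    obtain ⟨w, hw, hwv⟩ := ((V n).map ι).starProjection_apply_mem (ι v)
    have hTw : T w ∈ V n := apply_mem_of_apply_add_smul_mem hV₀ hV hTV hw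
    have h_orth : ι (v - w) ∈ ((V n).map ι)ᗮ := by
      rw [map_sub, hwv]
      exact Submodule.sub_starProjection_mem_orthogonal _
    have h_eigen : ι (T (v - w)) = -(c n • ι (v - w)) :=
      apply_eq_neg_smul_of_mem_orthogonal hT
        (fun _ => apply_mem_of_apply_add_smul_mem hV₀ hV hTV)
        (hTV n _ (sub_mem hv (hV n.le_succ hw))) h_orth
    have h_split (r : ℝ) : ι (T v) + r • ι v = (ι (T w) + r • ι w) + (r - c n) • ι (v - w) := by
      rw [sub_smul, sub_eq_add_neg (r • _), ← h_eigen]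
      simp only [map_sub, smul_sub]
      abel
    have h_cross (r : ℝ) : ⟪ι (T w) + r • ι w, ι (v - w)⟫ = 0 :=
      h_orth _ (add_mem (Submodule.mem_map_of_mem hTw)
        (Submodule.smul_mem _ r (Submodule.mem_map_of_mem hw)))
    calc 0 ≤ ⟪ι (T w) + a • ι w, ι (T w) + b • ι w⟫
          + (c n - a) * (c n - b) * ⟪ι (v - w), ι (v - w)⟫ :=
          add_nonneg (ih w hw) (mul_nonneg (hc n) real_inner_self_nonneg)
      _ = ⟪ι (T v) + a • ι v, ι (T v) + b • ι v⟫ := by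
          rw [h_split a, h_split b,
            inner_add_smul_add_smul_of_inner_eq_zero (h_cross a) (h_cross b)]
          ring

theorem inner_apply_add_smul_nonneg (hT : ∀ x y, ⟪ι (T x), ι y⟫ = ⟪ι x, ι (T y)⟫)
    (hV₀ : V 0 = ⊥) (hV : Monotone V) (hTV : ∀ n, ∀ v ∈ V (n + 1), T v + c n • v ∈ V n)
    (hdense : ⊤ ≤ (⨆ n, (V n).map ι).topologicalClosure)
    {a b : ℝ} (hc : ∀ n, 0 ≤ (c n - a) * (c n - b)) (x : S) :
    0 ≤ ⟪ι (T x) + a • ι x, ι (T x) + b • ι x⟫ := by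
  have h_mono : Monotone fun n => (V n).map ι := fun _ _ h => Submodule.map_mono (hV h)
  have h_lim (y : H) : Filter.Tendsto (fun n => ((V n).map ι).starProjection y) Filter.atTop
      (nhds y) :=
    Submodule.starProjection_tendsto_self _ h_mono y hdense
  refine ge_of_tendsto' (((h_lim _).add ((h_lim _).const_smul a)).inner
    ((h_lim _).add ((h_lim _).const_smul b))) fun n => ?_
  obtain ⟨w, hw, hwx⟩ := ((V n).map ι).starProjection_apply_mem (ι x)
  rw [← hwx, starProjection_apply_of_symmetric hT
    (fun _ => apply_mem_of_apply_add_smul_mem hV₀ hV hTV) hw hwx]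
  exact inner_apply_add_smul_nonneg_of_mem hT hV₀ hV hTV hc n w hw

end SymmetricTriangular

open InnerProductSpace Module
open scoped ContDiff Gradient Laplacian Topology

section SecondDerivative

variable {𝕜 E F : Type*} [NontriviallyNormedField 𝕜] [NormedAddCommGroup E] [NormedSpace 𝕜 E]
  [NormedAddCommGroup F] [NormedSpace 𝕜 F]

theorem differentiableAt_fderiv {f : E → F} {x : E} (hf : ContDiffAt 𝕜 2 f x) :
    DifferentiableAt 𝕜 (fderiv 𝕜 f) x :=
  (hf.fderiv_right (m := 1) (by norm_num)).differentiableAt one_ne_zero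

theorem differentiableAt_fderiv_apply {f : E → F} {x : E} (hf : ContDiffAt 𝕜 2 f x) (v : E) :
    DifferentiableAt 𝕜 (fun y => fderiv 𝕜 f y v) x :=
  (differentiableAt_fderiv hf).clm_apply (differentiableAt_const v)

theorem fderiv_fderiv_apply {f : E → F} {x : E} (hf : ContDiffAt 𝕜 2 f x) (v w : E) :
    fderiv 𝕜 (fun y => fderiv 𝕜 f y v) x w = fderiv 𝕜 (fderiv 𝕜 f) x w v := by
  simp [fderiv_clm_apply (differentiableAt_fderiv hf) (differentiableAt_const v)]

theorem fderiv_fderiv_mul_apply {f g : E → 𝕜} {x : E} (hf : ContDiffAt 𝕜 2 f x)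
    (hg : ContDiffAt 𝕜 2 g x) (v : E) :
    fderiv 𝕜 (fun y => fderiv 𝕜 (fun z => f z * g z) y v) x v =
      f x * fderiv 𝕜 (fun y => fderiv 𝕜 g y v) x v + 2 * (fderiv 𝕜 f x v * fderiv 𝕜 g x v)
        + g x * fderiv 𝕜 (fun y => fderiv 𝕜 f y v) x v := by
  have h_first : (fun y => fderiv 𝕜 (fun z => f z * g z) y v) =ᶠ[𝓝 x]
      fun y => f y * fderiv 𝕜 g y v + g y * fderiv 𝕜 f y v := by
    filter_upwards [hf.eventually (by simp), hg.eventually (by simp)] with y hfy hgy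
    rw [fderiv_fun_mul (hfy.differentiableAt two_ne_zero) (hgy.differentiableAt two_ne_zero)]
    rfl
  have hf₁ := hf.differentiableAt two_ne_zero
  have hg₁ := hg.differentiableAt two_ne_zero
  have hf₂ := differentiableAt_fderiv_apply hf v
  have hg₂ := differentiableAt_fderiv_apply hg v
  rw [h_first.fderiv_eq, fderiv_fun_add (hf₁.fun_mul hg₂) (hg₁.fun_mul hf₂), fderiv_fun_mul hf₁ hg₂,
    fderiv_fun_mul hg₁ hf₂]
  simp only [add_apply, smul_apply, smul_eq_mul]
  ring

theorem fderiv_apply_self_eq_zero {E F : Type*} [NormedAddCommGroup E] [NormedSpace ℝ E]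
    [NormedAddCommGroup F] [NormedSpace ℝ F] {f : E → F}
    (hf : ∀ r : ℝ, 0 < r → ∀ y, f (r • y) = f y) (x : E) : fderiv ℝ f x x = 0 := by
  by_cases hfx : DifferentiableAt ℝ f x
  · have h_chain : HasDerivAt (fun r : ℝ => f (r • x)) (fderiv ℝ f x x) 1 := by
      have h_line : HasDerivAt (fun r : ℝ => r • x) x 1 := by
        simpa using (hasDerivAt_id (1 : ℝ)).smul_const x
      exact hfx.hasFDerivAt.comp_hasDerivAt_of_eq 1 h_line (one_smul ℝ x).symm
    have h_const : (fun r : ℝ => f (r • x)) =ᶠ[𝓝 1] fun _ => f x :=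
      (lt_mem_nhds one_pos).mono fun r hr => hf r hr x
    exact h_chain.unique ((hasDerivAt_const 1 (f x)).congr_of_eventuallyEq h_const)
  · simp [fderiv_zero_of_not_differentiableAt hfx]

end SecondDerivative

section Laplacian

variable {E F : Type*} [NormedAddCommGroup E] [InnerProductSpace ℝ E] [NormedAddCommGroup F]
  [NormedSpace ℝ F]

theorem hasFDerivAt_comp_norm_sq {φ : ℝ → ℝ} {φ' : ℝ} {x : E}
    (hφ : HasDerivAt φ φ' (‖x‖ ^ 2)) :
    HasFDerivAt (fun y => φ (‖y‖ ^ 2)) ((2 * φ') • innerSL ℝ x) x := by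
  convert! hφ.comp_hasFDerivAt x (hasStrictFDerivAt_norm_sq x).hasFDerivAt using 1
  rw [← Nat.cast_smul_eq_nsmul ℝ, smul_smul, mul_comm, Nat.cast_ofNat]

theorem contDiffAt_comp_norm_sq {n : ℕ∞ω} {φ : ℝ → ℝ} {x : E} (hφ : ContDiffAt ℝ n φ (‖x‖ ^ 2)) :
    ContDiffAt ℝ n (fun y => φ (‖y‖ ^ 2)) x :=
  hφ.comp x (contDiff_norm_sq ℝ).contDiffAt

theorem fderiv_fderiv_comp_norm_sq_apply {φ : ℝ → ℝ} {x : E} (hφ : ContDiffAt ℝ 2 φ (‖x‖ ^ 2))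
    (v : E) :
    fderiv ℝ (fun y => fderiv ℝ (fun z => φ (‖z‖ ^ 2)) y v) x v =
      4 * deriv (deriv φ) (‖x‖ ^ 2) * ⟪x, v⟫ ^ 2 + 2 * deriv φ (‖x‖ ^ 2) * ‖v‖ ^ 2 := by
  have h_first : (fun y => fderiv ℝ (fun z => φ (‖z‖ ^ 2)) y v) =ᶠ[𝓝 x]
      fun y => 2 * deriv φ (‖y‖ ^ 2) * innerSL ℝ v y := by
    have h_near := (continuous_norm.pow 2).continuousAt.eventually (hφ.eventually (by simp))
    filter_upwards [h_near] with y hy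
    rw [(hasFDerivAt_comp_norm_sq (hy.differentiableAt two_ne_zero).hasDerivAt).fderiv]
    simp [real_inner_comm]
  have h_deriv : HasDerivAt (fun t => 2 * deriv φ t) (2 * deriv (deriv φ) (‖x‖ ^ 2)) (‖x‖ ^ 2) :=
    ((differentiableAt_fderiv_apply hφ 1).hasDerivAt).const_mul 2
  have h_mul := (hasFDerivAt_comp_norm_sq h_deriv).fun_mul (innerSL ℝ v).hasFDerivAt
  rw [h_first.fderiv_eq, h_mul.fderiv]
  simp only [coe_innerSL_apply, real_inner_comm, add_apply, smul_apply, real_inner_self_eq_norm_sq,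
    smul_eq_mul]
  ring

variable [FiniteDimensional ℝ E]

theorem laplacian_eq_sum_fderiv_fderiv {ι : Type*} [Fintype ι] (b : OrthonormalBasis ι ℝ E)
    {f : E → F} {x : E} (hf : ContDiffAt ℝ 2 f x) :
    Δ f x = ∑ i, fderiv ℝ (fun y => fderiv ℝ f y (b i)) x (b i) := by
  simp [laplacian_eq_iteratedFDeriv_orthonormalBasis f b, iteratedFDeriv_two_apply,
    fderiv_fderiv_apply hf]

theorem laplacian_comp_smul (f : E → F) (c : ℝ) (x : E) :
    Δ (fun y => f (c • y)) x = c ^ 2 • Δ f (c • x) := by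
  have h_first : fderiv ℝ (fun y => f (c • y)) = c • fun y => fderiv ℝ f (c • y) :=
    funext fun _ => fderiv_comp_smul c
  have h_second : fderiv ℝ (fderiv ℝ fun y => f (c • y)) x =
      c ^ 2 • fderiv ℝ (fderiv ℝ f) (c • x) := by
    rw [h_first, fderiv_const_smul_field (f := fun y => fderiv ℝ f (c • y)) c, Pi.smul_apply,
      fderiv_comp_smul, smul_smul, pow_two]
  simp [laplacian_eq_iteratedFDeriv_stdOrthonormalBasis, iteratedFDeriv_two_apply, h_second,
    Finset.smul_sum]

theorem laplacian_mul {f g : E → ℝ} {x : E} (hf : ContDiffAt ℝ 2 f x) (hg : ContDiffAt ℝ 2 g x) :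
    Δ (fun y => f y * g y) x = f x * Δ g x + 2 * ⟪∇ f x, ∇ g x⟫ + g x * Δ f x := by
  let b := stdOrthonormalBasis ℝ E
  have h_inner : ⟪∇ f x, ∇ g x⟫ = ∑ i, fderiv ℝ f x (b i) * fderiv ℝ g x (b i) := by
    rw [← b.sum_inner_mul_inner]
    simp
  simp only [laplacian_eq_sum_fderiv_fderiv b (hf.mul hg), laplacian_eq_sum_fderiv_fderiv b hf,
    laplacian_eq_sum_fderiv_fderiv b hg, fderiv_fderiv_mul_apply hf hg, Finset.sum_add_distrib,
    ← Finset.mul_sum, h_inner]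

theorem laplacian_comp_norm_sq {φ : ℝ → ℝ} {x : E} (hφ : ContDiffAt ℝ 2 φ (‖x‖ ^ 2)) :
    Δ (fun y : E => φ (‖y‖ ^ 2)) x =
      4 * ‖x‖ ^ 2 * deriv (deriv φ) (‖x‖ ^ 2) + 2 * finrank ℝ E * deriv φ (‖x‖ ^ 2) := by
  let b := stdOrthonormalBasis ℝ E
  have h_sum : ∑ i, ⟪x, b i⟫ ^ 2 = ‖x‖ ^ 2 := by
    simpa using b.sum_sq_norm_inner_left x
  rw [laplacian_eq_sum_fderiv_fderiv b (contDiffAt_comp_norm_sq hφ)]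
  simp only [fderiv_fderiv_comp_norm_sq_apply hφ, Finset.sum_add_distrib, ← Finset.mul_sum, h_sum,
    b.norm_eq_one, one_pow, Finset.sum_const, Finset.card_univ, Fintype.card_fin, nsmul_eq_mul]
  ring

theorem laplacian_comp_norm_sq_mul {φ : ℝ → ℝ} {f : E → ℝ} {x : E}
    (hφ : ContDiffAt ℝ 2 φ (‖x‖ ^ 2)) (hf : ContDiffAt ℝ 2 f x) (hfx : fderiv ℝ f x x = 0) :
    Δ (fun y => φ (‖y‖ ^ 2) * f y) x = φ (‖x‖ ^ 2) * Δ f x +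
      (4 * ‖x‖ ^ 2 * deriv (deriv φ) (‖x‖ ^ 2) + 2 * finrank ℝ E * deriv φ (‖x‖ ^ 2)) * f x := by
  have h_inner : ⟪∇ (fun y => φ (‖y‖ ^ 2)) x, ∇ f x⟫ = 0 := by
    have h_fderiv := hasFDerivAt_comp_norm_sq (hφ.differentiableAt two_ne_zero).hasDerivAt
    rw [inner_gradient_left, h_fderiv.fderiv]
    simp [hfx]
  rw [laplacian_mul (contDiffAt_comp_norm_sq hφ) hf, h_inner, laplacian_comp_norm_sq hφ]
  ring

theorem contDiffAt_laplacian {f : E → F} {x : E} (hf : ContDiffAt ℝ ∞ f x) :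
    ContDiffAt ℝ ∞ (Δ f) x := by
  have hf' : ContDiffAt ℝ ∞ (fderiv ℝ (fderiv ℝ f)) x :=
    (hf.fderiv_right (m := ∞) le_rfl).fderiv_right (m := ∞) le_rfl
  simp only [laplacian_eq_iteratedFDeriv_stdOrthonormalBasis, iteratedFDeriv_two_apply]
  exact ContDiffAt.sum fun _ _ => (hf'.clm_apply contDiffAt_const).clm_apply contDiffAt_const

end Laplacian

section Green

variable {E : Type*} [NormedAddCommGroup E] [InnerProductSpace ℝ E] [FiniteDimensional ℝ E]

theorem continuous_laplacian {F : Type*} [NormedAddCommGroup F] [NormedSpace ℝ F]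
    {f : E → F} (hf : ContDiff ℝ ∞ f) : Continuous (Δ f) :=
  continuous_iff_continuousAt.2 fun _ => (contDiffAt_laplacian hf.contDiffAt).continuousAt

theorem integral_mul_laplacian_sub_eq_zero [MeasurableSpace E] [BorelSpace E] {μ : Measure E}
    [μ.IsAddHaarMeasure] {u v : E → ℝ} (hu : ContDiff ℝ ∞ u) (hv : ContDiff ℝ ∞ v)
    (hu' : HasCompactSupport u) (hv' : HasCompactSupport v) :
    ∫ x, (u x * Δ v x - v x * Δ u x) ∂μ = 0 := by
  have h_green : ∫ x, u x * Δ v x ∂μ = ∫ x, Δ u x * v x ∂μ := by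
    have h_schwartz := SchwartzMap.integral_mul_laplacian_right_eq_left (μ := μ)
      (hu'.toSchwartzMap hu) (hv'.toSchwartzMap hv)
    simp only [SchwartzMap.laplacian_apply] at h_schwartz
    exact h_schwartz
  have h_int {f g : E → ℝ} (hf : ContDiff ℝ ∞ f) (hg : ContDiff ℝ ∞ g)
      (hf' : HasCompactSupport f) : Integrable (fun x => f x * Δ g x) μ :=
    (hf.continuous.mul (continuous_laplacian hg)).integrable_of_hasCompactSupport hf'.mul_right
  rw [integral_sub (h_int hu hv hu') (h_int hv hu hv'), h_green]
  simp only [mul_comm, sub_self]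

end Green

section Cutoff

variable {E : Type*} [NormedAddCommGroup E] {φ : ℝ → ℝ}

theorem hasCompactSupport_comp_norm_sq [ProperSpace E] (hφ : HasCompactSupport φ) :
    HasCompactSupport fun x : E => φ (‖x‖ ^ 2) := by
  rw [hasCompactSupport_iff_eventuallyEq, Filter.coclosedCompact_eq_cocompact] at hφ ⊢
  exact (((Filter.tendsto_pow_atTop two_ne_zero).comp
    (tendsto_norm_cocompact_atTop (E := E))).mono_right atTop_le_cocompact).eventually hφ

theorem contDiff_comp_norm_sq_mul [InnerProductSpace ℝ E] {f : E → ℝ} (hφ : ContDiff ℝ ∞ φ)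
    (hφ₀ : φ =ᶠ[𝓝 0] 0) (hf : ContDiffOn ℝ ∞ f {0}ᶜ) : ContDiff ℝ ∞ fun x => φ (‖x‖ ^ 2) * f x := by
  refine contDiff_iff_contDiffAt.2 fun x => ?_
  rcases eq_or_ne x 0 with rfl | hx
  · have h_lim : Filter.Tendsto (fun x : E => ‖x‖ ^ 2) (𝓝 0) (𝓝 0) :=
      (continuous_norm.pow 2).tendsto' _ _ (by simp)
    refine contDiffAt_const (c := (0 : ℝ)) |>.congr_of_eventuallyEq ?_
    filter_upwards [h_lim.eventually hφ₀] with y hy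
    rw [hy, Pi.zero_apply, zero_mul]
  · exact (contDiffAt_comp_norm_sq hφ.contDiffAt).mul
      (hf.contDiffAt (isOpen_compl_singleton.mem_nhds hx))

theorem exists_contDiff_hasCompactSupport_eventuallyEq_zero :
    ∃ φ : ℝ → ℝ, ContDiff ℝ ∞ φ ∧ HasCompactSupport φ ∧ φ =ᶠ[𝓝 0] 0 ∧ φ 1 ≠ 0 := by
  let φ : ContDiffBump (1 : ℝ) := ⟨1 / 4, 1 / 2, by norm_num, by norm_num⟩
  refine ⟨φ, φ.contDiff, φ.hasCompactSupport, ?_, ?_⟩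
  · rw [← notMem_tsupport_iff_eventuallyEq, φ.tsupport_eq]
    norm_num [φ]
  · exact (φ.pos_of_mem_ball (Metric.mem_ball_self φ.rOut_pos)).ne'

theorem integral_sq_comp_norm_sq_mul_inv_pos [InnerProductSpace ℝ E] [FiniteDimensional ℝ E]
    [Nontrivial E] [MeasurableSpace E] [BorelSpace E] {μ : Measure E} [μ.IsAddHaarMeasure]
    (hφ : ContDiff ℝ ∞ φ) (hφ_supp : HasCompactSupport φ) (hφ₀ : φ =ᶠ[𝓝 0] 0) (hφ₁ : φ 1 ≠ 0) :
    0 < ∫ x : E, φ (‖x‖ ^ 2) ^ 2 * (‖x‖ ^ 2)⁻¹ ∂μ := by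
  have h_smooth : ContDiff ℝ ∞ fun x : E => φ (‖x‖ ^ 2) * (φ (‖x‖ ^ 2) * (‖x‖ ^ 2)⁻¹) :=
    contDiff_comp_norm_sq_mul hφ hφ₀ <|
      (hφ.comp (contDiff_norm_sq ℝ)).contDiffOn.mul <|
        (contDiff_norm_sq ℝ).contDiffOn.inv fun x hx => pow_ne_zero 2 (norm_ne_zero_iff.2 hx)
  obtain ⟨x, hx⟩ := exists_norm_eq E zero_le_one
  simp only [pow_two (φ _), mul_assoc]
  refine h_smooth.continuous.integral_pos_of_hasCompactSupport_nonneg_nonzero (x := x)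
    (hasCompactSupport_comp_norm_sq hφ_supp).mul_right (fun y => ?_) (by simp [hx, hφ₁])
  rw [← mul_assoc]
  exact mul_nonneg (mul_self_nonneg _) (inv_nonneg.2 (sq_nonneg _))

end Cutoff

section Polynomial

open MvPolynomial

section CommSemiring

variable {σ R : Type*} [CommSemiring R]

variable (σ R) in
/-- The polynomials of total degree less than `n`; the strict bound makes the filtration start
at `⊥`. -/
def polyDegreeLT (n : ℕ) : Submodule R (MvPolynomial σ R) :=
  restrictSupport R {m | m.degree < n}

theorem mem_polyDegreeLT {n : ℕ} {p : MvPolynomial σ R} :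
    p ∈ polyDegreeLT σ R n ↔ ∀ m, coeff m p ≠ 0 → m.degree < n := by
  simp [polyDegreeLT, mem_restrictSupport_iff, Set.subset_def]

theorem polyDegreeLT_zero : polyDegreeLT σ R 0 = ⊥ := by
  simp [polyDegreeLT, restrictSupport_eq_span]

theorem polyDegreeLT_mono : Monotone (polyDegreeLT σ R) :=
  fun _ _ h => restrictSupport_mono R fun _ hm => lt_of_lt_of_le hm h

theorem iSup_polyDegreeLT : ⨆ n, polyDegreeLT σ R n = ⊤ := by
  refine eq_top_iff.2 fun p _ => Submodule.mem_iSup_of_mem (p.totalDegree + 1) ?_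
  exact mem_polyDegreeLT.2 fun m hm => Nat.lt_succ_iff.2 (le_totalDegree (mem_support_iff.2 hm))

instance [Finite σ] (n : ℕ) : Module.Finite R (polyDegreeLT σ R n) :=
  have := (Finsupp.finite_of_degree_lt (σ := σ) n).to_subtype
  Module.Finite.of_basis (basisRestrictSupport R _)

theorem pderiv_mem_polyDegreeLT {n : ℕ} {p : MvPolynomial σ R} (hp : p ∈ polyDegreeLT σ R (n + 1))
    (i : σ) : pderiv i p ∈ polyDegreeLT σ R n := by
  rw [mem_polyDegreeLT] at hp ⊢
  intro m hm
  rw [coeff_pderiv] at hm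
  simpa using hp _ (left_ne_zero_of_mul hm)

theorem eval_smul_of_isHomogeneous {n : ℕ} {p : MvPolynomial σ R} (hp : p.IsHomogeneous n) (r : R)
    (x : σ → R) : eval (r • x) p = r ^ n * eval x p := by
  rw [eval_eq, eval_eq, Finset.mul_sum]
  refine Finset.sum_congr rfl fun m hm => ?_
  have h_degree : ∑ i ∈ m.support, m i = n := by
    rw [← Finsupp.degree_apply, Finsupp.degree_eq_weight_one]
    exact hp (mem_support_iff.1 hm)
  simp only [Pi.smul_apply, smul_eq_mul, mul_pow, Finset.prod_mul_distrib,
    Finset.prod_pow_eq_pow_sum, h_degree]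
  ring

variable [Fintype σ]

/-- The Laplacian `∑ i, ∂²p/∂Xᵢ²` of a polynomial. -/
def polyLaplacian (p : MvPolynomial σ R) : MvPolynomial σ R :=
  ∑ i, pderiv i (pderiv i p)

theorem polyLaplacian_mem_polyDegreeLT {n : ℕ} {p : MvPolynomial σ R}
    (hp : p ∈ polyDegreeLT σ R (n + 1)) : polyLaplacian p ∈ polyDegreeLT σ R n :=
  sum_mem fun i _ => pderiv_mem_polyDegreeLT (polyDegreeLT_mono n.le_succ <|
    pderiv_mem_polyDegreeLT hp i) i

end CommSemiring

variable {σ : Type*} [Fintype σ] (p : MvPolynomial σ ℝ)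

theorem contDiff_eval_ofLp {n : ℕ∞ω} :
    ContDiff ℝ n fun x : EuclideanSpace ℝ σ => eval x.ofLp p :=
  (AnalyticOnNhd.eval_continuousLinearMap
    (EuclideanSpace.equiv σ ℝ).toContinuousLinearMap p).contDiff

theorem fderiv_eval_ofLp_single {σ : Type*} [Finite σ] [DecidableEq σ] (p : MvPolynomial σ ℝ)
    (x : EuclideanSpace ℝ σ) (i : σ) :
    fderiv ℝ (fun y : EuclideanSpace ℝ σ => eval y.ofLp p) x (EuclideanSpace.single i 1) =
      eval x.ofLp (pderiv i p) := by
  have := Fintype.ofFinite σ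
  induction p using MvPolynomial.induction_on with
  | C a => simp
  | add p q hp hq =>
    have h_add := fderiv_fun_add ((contDiff_eval_ofLp p).differentiable one_ne_zero x)
      ((contDiff_eval_ofLp q).differentiable one_ne_zero x)
    simp only [map_add, h_add, add_apply, hp, hq]
  | mul_X p j hp =>
    have h_coord : HasFDerivAt (fun y : EuclideanSpace ℝ σ => y.ofLp j)
        (EuclideanSpace.proj (𝕜 := ℝ) j) x :=
      (EuclideanSpace.proj (𝕜 := ℝ) j).hasFDerivAt
    have h_mul := fderiv_fun_mul ((contDiff_eval_ofLp p).differentiable one_ne_zero x)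
      h_coord.differentiableAt
    simp only [map_mul, eval_X, h_mul, h_coord.fderiv, add_apply, _root_.smul_apply, hp,
      pderiv_mul, pderiv_X, map_add, smul_eq_mul]
    rcases eq_or_ne j i with rfl | hij
    · simp [add_comm, mul_comm]
    · simp [hij, mul_comm]

theorem laplacian_eval_ofLp (x : EuclideanSpace ℝ σ) :
    Δ (fun y : EuclideanSpace ℝ σ => eval y.ofLp p) x = eval x.ofLp (polyLaplacian p) := by
  classical
  simp [laplacian_eq_sum_fderiv_fderiv (EuclideanSpace.basisFun σ ℝ)
    (contDiff_eval_ofLp p).contDiffAt, fderiv_eval_ofLp_single, polyLaplacian]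

end Polynomial

section Sphere

local notation "𝔼" d:max => EuclideanSpace ℝ (Fin d)
local notation "𝕊" d:max => Metric.sphere (0 : EuclideanSpace ℝ (Fin d)) 1

variable {d : ℕ} {F G : 𝕊 d → ℝ} {x : 𝔼 d}

theorem ext0_smul {r : ℝ} (hr : 0 < r) (x : 𝔼 d) : ext0 F (r • x) = ext0 F x := by
  by_cases hx : x = 0
  · rw [hx, smul_zero]
  · have h_norm : ‖r • x‖⁻¹ • r • x = ‖x‖⁻¹ • x := by
      rw [norm_smul, Real.norm_of_nonneg hr.le, smul_smul, mul_inv_rev,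
        inv_mul_cancel_right₀ hr.ne']
    simp only [ext0, smul_eq_zero, hr.ne', hx, or_self, dite_false, h_norm]

theorem ext0_coe (θ : 𝕊 d) : ext0 F θ = F θ := by
  simp [ext0, ne_zero_of_mem_unit_sphere θ]

theorem ext0_comp_coe (f : 𝔼 d → ℝ) (hx : x ≠ 0) :
    ext0 (fun θ : 𝕊 d => f θ) x = f (‖x‖⁻¹ • x) :=
  dif_neg hx

theorem ext0_add (F G : 𝕊 d → ℝ) : ext0 (F + G) = ext0 F + ext0 G := by
  ext x
  by_cases hx : x = 0 <;> simp [ext0, hx]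

theorem ext0_const_smul (r : ℝ) (F : 𝕊 d → ℝ) : ext0 (r • F) = r • ext0 F := by
  ext x
  by_cases hx : x = 0 <;> simp [ext0, hx]

theorem SphSmooth.contDiffAt (hF : SphSmooth F) (hx : x ≠ 0) : ContDiffAt ℝ ∞ (ext0 F) x :=
  ContDiffOn.contDiffAt hF (isOpen_compl_singleton.mem_nhds hx)

theorem SphSmooth.contDiffAt_two (hF : SphSmooth F) (hx : x ≠ 0) : ContDiffAt ℝ 2 (ext0 F) x :=
  contDiffAt_infty.1 (hF.contDiffAt hx) 2

theorem SphSmooth.continuous (hF : SphSmooth F) : Continuous F := by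
  have h_comp : Continuous fun θ : 𝕊 d => ext0 F θ :=
    hF.continuousOn.comp_continuous continuous_subtype_val ne_zero_of_mem_unit_sphere
  simpa only [ext0_coe] using h_comp

theorem sphSmooth_comp_coe {f : 𝔼 d → ℝ} (hf : ContDiffOn ℝ ∞ f {0}ᶜ) :
    SphSmooth fun θ : 𝕊 d => f θ := by
  have h_normalize : ContDiffOn ℝ ∞ (fun x : 𝔼 d => ‖x‖⁻¹ • x) {0}ᶜ :=
    fun x hx => ((contDiffAt_norm ℝ hx).inv (norm_ne_zero_iff.2 hx)).smul
      contDiffAt_id |>.contDiffWithinAt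
  have h_maps : Set.MapsTo (fun x : 𝔼 d => ‖x‖⁻¹ • x) {0}ᶜ {0}ᶜ :=
    fun x hx => smul_ne_zero (inv_ne_zero (norm_ne_zero_iff.2 hx)) hx
  exact (hf.comp h_normalize h_maps).congr fun x hx => ext0_comp_coe f hx

theorem eucLap_eq_laplacian {f : 𝔼 d → ℝ} (hf : ContDiffAt ℝ 2 f x) : eucLap f x = Δ f x := by
  simp [eucLap, laplacian_eq_sum_fderiv_fderiv (EuclideanSpace.basisFun (Fin d) ℝ) hf]

theorem sphLap_apply (hF : SphSmooth F) (θ : 𝕊 d) :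
    sphLap F θ = Δ (ext0 F) θ :=
  eucLap_eq_laplacian (hF.contDiffAt_two (ne_zero_of_mem_unit_sphere θ))

theorem SphSmooth.add (hF : SphSmooth F) (hG : SphSmooth G) : SphSmooth (F + G) := by
  rw [SphSmooth, ext0_add]
  exact ContDiffOn.add hF hG

theorem SphSmooth.const_smul (r : ℝ) (hF : SphSmooth F) : SphSmooth (r • F) := by
  rw [SphSmooth, ext0_const_smul]
  exact ContDiffOn.const_smul r hF

theorem SphSmooth.sphLap (hF : SphSmooth F) : SphSmooth (sphLap F) := by
  rw [funext (sphLap_apply hF)]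
  exact sphSmooth_comp_coe fun x hx => (contDiffAt_laplacian (hF.contDiffAt hx)).contDiffWithinAt

theorem sphLap_add (hF : SphSmooth F) (hG : SphSmooth G) :
    sphLap (F + G) = sphLap F + sphLap G := by
  ext θ
  have hθ := ne_zero_of_mem_unit_sphere θ
  rw [Pi.add_apply, sphLap_apply (hF.add hG), sphLap_apply hF, sphLap_apply hG, ext0_add,
    (hF.contDiffAt_two hθ).laplacian_add (hG.contDiffAt_two hθ)]

theorem sphLap_const_smul (r : ℝ) (hF : SphSmooth F) : sphLap (r • F) = r • sphLap F := by
  ext θ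
  rw [Pi.smul_apply, sphLap_apply (hF.const_smul r), sphLap_apply hF, ext0_const_smul,
    laplacian_smul r (hF.contDiffAt_two (ne_zero_of_mem_unit_sphere θ))]

theorem laplacian_ext0 (hF : SphSmooth F) (hx : x ≠ 0) :
    Δ (ext0 F) x = (‖x‖ ^ 2)⁻¹ * ext0 (sphLap F) x := by
  have hx' : 0 < ‖x‖⁻¹ := inv_pos.2 (norm_pos_iff.2 hx)
  rw [funext (sphLap_apply hF), ext0_comp_coe _ hx, ← inv_pow, ← smul_eq_mul,
    ← laplacian_comp_smul]
  simp only [ext0_smul hx']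

theorem laplacian_comp_norm_sq_mul_ext0 {φ : ℝ → ℝ} (hφ : ContDiffAt ℝ 2 φ (‖x‖ ^ 2))
    (hF : SphSmooth F) (hx : x ≠ 0) :
    Δ (fun y => φ (‖y‖ ^ 2) * ext0 F y) x =
      φ (‖x‖ ^ 2) * (‖x‖ ^ 2)⁻¹ * ext0 (sphLap F) x +
        (4 * ‖x‖ ^ 2 * deriv (deriv φ) (‖x‖ ^ 2) + 2 * d * deriv φ (‖x‖ ^ 2)) * ext0 F x := by
  rw [laplacian_comp_norm_sq_mul hφ (hF.contDiffAt_two hx)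
    (fderiv_apply_self_eq_zero (fun r hr => ext0_smul hr) x), laplacian_ext0 hF hx,
    finrank_euclideanSpace_fin]
  ring

theorem sphLap_comp_coe_of_homogeneous {f : 𝔼 d → ℝ}
    (hf : ContDiffOn ℝ ∞ f {0}ᶜ) {s : ℝ} (hfs : ∀ r : ℝ, 0 < r → ∀ y, f (r • y) = r ^ s * f y)
    (θ : 𝕊 d) :
    sphLap (fun θ : 𝕊 d => f θ) θ = Δ f θ - s * (s + d - 2) * f θ := by
  have hθ := ne_zero_of_mem_unit_sphere θ
  have hθ₁ : ‖(θ : 𝔼 d)‖ = 1 := norm_eq_of_mem_sphere θ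
  have h_polar : f =ᶠ[𝓝 θ.1] fun y => (‖y‖ ^ 2) ^ (s / 2) * ext0 (fun θ : 𝕊 d => f θ) y := by
    filter_upwards [isOpen_ne.mem_nhds hθ] with y hy
    have hy' : 0 < ‖y‖ := norm_pos_iff.2 hy
    rw [ext0_comp_coe f hy, ← Real.rpow_natCast_mul hy'.le, Nat.cast_two,
      mul_div_cancel₀ s two_ne_zero, ← hfs _ hy', smul_inv_smul₀ hy'.ne']
  have h_deriv : deriv (fun t : ℝ => t ^ (s / 2)) = fun t => s / 2 * t ^ (s / 2 - 1) :=
    Real.deriv_rpow_const' _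
  have h_pow : ContDiffAt ℝ 2 (fun t : ℝ => t ^ (s / 2)) (‖θ.1‖ ^ 2) :=
    Real.contDiffAt_rpow_const_of_ne (by simp [hθ₁])
  rw [(laplacian_congr_nhds h_polar).eq_of_nhds,
    laplacian_comp_norm_sq_mul_ext0 h_pow (sphSmooth_comp_coe hf) hθ, ext0_coe, ext0_coe, h_deriv,
    deriv_const_mul_field, Real.deriv_rpow_const, hθ₁]
  simp only [one_pow, Real.one_rpow, inv_one]
  ring

theorem integral_comp_norm_mul_ext0_eq_integral_mul (hd : 0 < d) (k : ℝ → ℝ) (K : 𝕊 d → ℝ) :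
    ∫ x, k ‖x‖ * ext0 K x =
      (∫ θ, K θ ∂sphMeasure d) * ∫ r : Set.Ioi (0 : ℝ), k r ∂Measure.volumeIoiPow (d - 1) := by
  have : Nonempty (Fin d) := ⟨⟨0, hd⟩⟩
  have h_dim : finrank ℝ (𝔼 d) = d := finrank_euclideanSpace_fin
  have h_coords (x : ({0}ᶜ : Set (𝔼 d))) : k ‖x.1‖ * ext0 K x =
      (fun p : 𝕊 d × Set.Ioi (0 : ℝ) => K p.1 * k p.2) (homeomorphUnitSphereProd (𝔼 d) x) := by
    have h_dir : ext0 K x = K (homeomorphUnitSphereProd (𝔼 d) x).1 :=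
      (dif_neg x.2).trans <| congrArg K <| Subtype.ext
        (homeomorphUnitSphereProd_apply_fst_coe (𝔼 d) x).symm
    rw [h_dir, mul_comm, ← homeomorphUnitSphereProd_apply_snd_coe]
  rw [← restrict_compl_singleton (μ := volume) 0,
    ← integral_subtype_comap (measurableSet_singleton _).compl]
  simp only [h_coords]
  rw [(volume : Measure (𝔼 d)).measurePreserving_homeomorphUnitSphereProd.integral_comp
    (Homeomorph.measurableEmbedding _)
      (fun p : 𝕊 d × Set.Ioi (0 : ℝ) => K p.1 * k p.2), h_dim]
  exact integral_prod_mul K fun r : Set.Ioi (0 : ℝ) => k r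

instance (d : ℕ) : IsFiniteMeasure (sphMeasure d) :=
  inferInstanceAs (IsFiniteMeasure (volume : Measure (𝔼 d)).toSphere)

theorem integral_comp_norm_mul_ext0 (hd : 0 < d) (k : ℝ → ℝ) (K : 𝕊 d → ℝ) :
    ∫ x, k ‖x‖ * ext0 K x = (⨍ θ, K θ ∂sphMeasure d) * ∫ x : 𝔼 d, k ‖x‖ := by
  have : Nonempty (Fin d) := ⟨⟨0, hd⟩⟩
  have h_one : ∫ x : 𝔼 d, k ‖x‖ = ∫ x : 𝔼 d, k ‖x‖ * ext0 1 x := by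
    refine integral_congr_ae ?_
    filter_upwards [Measure.ae_ne volume (0 : 𝔼 d)] with x hx
    simp [ext0, hx]
  have : NeZero (sphMeasure d) := ⟨Measure.toSphere_ne_zero _⟩
  have h_area : (sphMeasure d).real Set.univ ≠ 0 := measureReal_univ_ne_zero
  rw [h_one, integral_comp_norm_mul_ext0_eq_integral_mul hd,
    integral_comp_norm_mul_ext0_eq_integral_mul hd, average_eq, smul_eq_mul]
  simp only [Pi.one_apply, integral_const, smul_eq_mul, mul_one]
  field_simp

theorem mul_laplacian_sub_mul_laplacian_eq_mul_ext0 {φ : ℝ → ℝ}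
    (hφ : ContDiffAt ℝ 2 φ (‖x‖ ^ 2)) (hF : SphSmooth F) (hG : SphSmooth G) :
    φ (‖x‖ ^ 2) * ext0 F x * Δ (fun y => φ (‖y‖ ^ 2) * ext0 G y) x -
        φ (‖x‖ ^ 2) * ext0 G x * Δ (fun y => φ (‖y‖ ^ 2) * ext0 F y) x =
      φ (‖x‖ ^ 2) ^ 2 * (‖x‖ ^ 2)⁻¹ * ext0 (fun θ => F θ * sphLap G θ - sphLap F θ * G θ) x := by
  rcases eq_or_ne x 0 with rfl | hx
  · simp [ext0]
  · rw [laplacian_comp_norm_sq_mul_ext0 hφ hF hx, laplacian_comp_norm_sq_mul_ext0 hφ hG hx]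
    simp only [ext0, hx, dite_false]
    ring

theorem integral_mul_sphLap_right_eq_left (hF : SphSmooth F) (hG : SphSmooth G) :
    ∫ θ, F θ * sphLap G θ ∂sphMeasure d = ∫ θ, sphLap F θ * G θ ∂sphMeasure d := by
  rcases d.eq_zero_or_pos with rfl | hd
  · have h_null : sphMeasure 0 = 0 := (Measure.toSphere_eq_zero_iff _).2 inferInstance
    simp only [h_null, integral_zero_measure]
  have : Nonempty (Fin d) := ⟨⟨0, hd⟩⟩
  obtain ⟨φ, hφ, hφ_supp, hφ₀, hφ₁⟩ := exists_contDiff_hasCompactSupport_eventuallyEq_zero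
  have h_supp : HasCompactSupport fun x : 𝔼 d => φ (‖x‖ ^ 2) :=
    hasCompactSupport_comp_norm_sq hφ_supp
  have h_green := integral_mul_laplacian_sub_eq_zero (μ := volume)
    (contDiff_comp_norm_sq_mul hφ hφ₀ hF) (contDiff_comp_norm_sq_mul hφ hφ₀ hG)
    h_supp.mul_right h_supp.mul_right
  simp only [mul_laplacian_sub_mul_laplacian_eq_mul_ext0 (contDiff_infty.1 hφ 2).contDiffAt hF hG]
    at h_green
  rw [integral_comp_norm_mul_ext0 hd fun r => φ (r ^ 2) ^ 2 * (r ^ 2)⁻¹] at h_green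
  have h_radial : ∫ x : 𝔼 d, φ (‖x‖ ^ 2) ^ 2 * (‖x‖ ^ 2)⁻¹ ≠ 0 :=
    (integral_sq_comp_norm_sq_mul_inv_pos hφ hφ_supp hφ₀ hφ₁).ne'
  have h_int {K L : 𝕊 d → ℝ} (hK : SphSmooth K) (hL : SphSmooth L) :
      Integrable (fun θ => K θ * L θ) (sphMeasure d) :=
    (hK.continuous.mul hL.continuous).integrable_of_hasCompactSupport (.of_compactSpace _)
  rw [← sub_eq_zero, ← integral_sub (h_int hF hG.sphLap) (h_int hF.sphLap hG),
    ← measure_smul_average, (mul_eq_zero.1 h_green).resolve_right h_radial, smul_zero]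

theorem sphSmooth_zero : SphSmooth (0 : 𝕊 d → ℝ) :=
  sphSmooth_comp_coe (f := fun _ => 0) contDiffOn_const

variable (d) in
/-- The space `C^∞(𝕊^{d-1})` of smooth functions on the unit sphere. -/
def smoothFunctions : Submodule ℝ (𝕊 d → ℝ) where
  carrier := {F | SphSmooth F}
  add_mem' := SphSmooth.add
  zero_mem' := sphSmooth_zero
  smul_mem' r _ := SphSmooth.const_smul r

variable (d) in
/-- The spherical Laplacian as an operator on smooth functions. -/
def smoothSphLap : smoothFunctions d →ₗ[ℝ] smoothFunctions d where
  toFun F := ⟨sphLap F, F.2.sphLap⟩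
  map_add' F G := Subtype.ext (sphLap_add F.2 G.2)
  map_smul' r F := Subtype.ext (sphLap_const_smul r F.2)

variable (d) in
/-- The inclusion of the smooth functions in the continuous functions. -/
def smoothToContinuousMap : smoothFunctions d →ₗ[ℝ] C(𝕊 d, ℝ) where
  toFun F := ⟨F, F.2.continuous⟩
  map_add' _ _ := rfl
  map_smul' _ _ := rfl

variable (d) in
/-- The embedding of the smooth functions in `L²(𝕊^{d-1})`. -/
def smoothToL2 : smoothFunctions d →ₗ[ℝ] Lp ℝ 2 (sphMeasure d) :=
  (ContinuousMap.toLp 2 (sphMeasure d) ℝ).toLinearMap ∘ₗ smoothToContinuousMap d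

variable (d) in
/-- The restriction of polynomials to the unit sphere. -/
def polyToSmooth : MvPolynomial (Fin d) ℝ →ₗ[ℝ] smoothFunctions d where
  toFun p := ⟨fun θ => MvPolynomial.eval θ.1.ofLp p,
    sphSmooth_comp_coe (f := fun x => MvPolynomial.eval x.ofLp p) (contDiff_eval_ofLp p).contDiffOn⟩
  map_add' p q := Subtype.ext (funext fun _ => map_add _ p q)
  map_smul' r p := Subtype.ext (funext fun _ => MvPolynomial.smul_eval _ p r)

theorem inner_smoothToL2 (F G : smoothFunctions d) :
    ⟪smoothToL2 d F, smoothToL2 d G⟫ = ∫ θ, F.1 θ * G.1 θ ∂sphMeasure d :=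
  (ContinuousMap.inner_toLp (𝕜 := ℝ) (sphMeasure d) (smoothToContinuousMap d F)
    (smoothToContinuousMap d G)).trans (integral_congr_ae (.of_forall fun _ => mul_comm _ _))

theorem inner_smoothToL2_smoothSphLap (F G : smoothFunctions d) :
    ⟪smoothToL2 d (smoothSphLap d F), smoothToL2 d G⟫ =
      ⟪smoothToL2 d F, smoothToL2 d (smoothSphLap d G)⟫ := by
  rw [inner_smoothToL2, inner_smoothToL2]
  exact (integral_mul_sphLap_right_eq_left F.2 G.2).symm

theorem smoothSphLap_polyToSmooth {n : ℕ} {p : MvPolynomial (Fin d) ℝ} (hp : p.IsHomogeneous n) :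
    smoothSphLap d (polyToSmooth d p) + ((n : ℝ) * (n + d - 2)) • polyToSmooth d p =
      polyToSmooth d (polyLaplacian p) := by
  have h_homogeneous (r : ℝ) (_ : 0 < r) (x : 𝔼 d) :
      MvPolynomial.eval (r • x).ofLp p = r ^ (n : ℝ) * MvPolynomial.eval x.ofLp p := by
    rw [Real.rpow_natCast]
    exact eval_smul_of_isHomogeneous hp r x.ofLp
  refine Subtype.ext (funext fun θ => ?_)
  have h := sphLap_comp_coe_of_homogeneous (contDiff_eval_ofLp p).contDiffOn h_homogeneous θ
  rw [laplacian_eval_ofLp] at h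
  exact sub_eq_iff_eq_add.1 h.symm |>.symm

theorem smoothSphLap_add_smul_mem_map_polyDegreeLT (n : ℕ) :
    ∀ F ∈ (polyDegreeLT (Fin d) ℝ (n + 1)).map (polyToSmooth d),
      smoothSphLap d F + ((n : ℝ) * (n + d - 2)) • F ∈
        (polyDegreeLT (Fin d) ℝ n).map (polyToSmooth d) := by
  let c : ℕ → ℝ := fun n => n * (n + d - 2)
  let W := (polyDegreeLT (Fin d) ℝ n).map (polyToSmooth d)
  suffices h : polyDegreeLT (Fin d) ℝ (n + 1) ≤
      W.comap ((smoothSphLap d + c n • LinearMap.id) ∘ₗ polyToSmooth d) by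
    rintro _ ⟨p, hp, rfl⟩
    exact h hp
  rw [polyDegreeLT, MvPolynomial.restrictSupport_eq_span, Submodule.span_le]
  rintro _ ⟨m, hm, rfl⟩
  let p : MvPolynomial (Fin d) ℝ := MvPolynomial.monomial m 1
  have h_mem {k : ℕ} (hk : m.degree < k) : p ∈ polyDegreeLT (Fin d) ℝ k :=
    (MvPolynomial.monomial_mem_restrictSupport ℝ).2 (.inl hk)
  have h_lap : smoothSphLap d (polyToSmooth d p) + c m.degree • polyToSmooth d p ∈ W := by
    rw [smoothSphLap_polyToSmooth (MvPolynomial.isHomogeneous_monomial 1 rfl)]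
    exact Submodule.mem_map_of_mem (polyDegreeLT_mono (Nat.lt_succ_iff.1 hm)
      (polyLaplacian_mem_polyDegreeLT (h_mem m.degree.lt_succ_self)))
  have h_shift : (c n - c m.degree) • polyToSmooth d p ∈ W := by
    rcases (Nat.lt_succ_iff.1 hm).eq_or_lt with h_eq | h_lt
    · rw [h_eq, sub_self, zero_smul]
      exact W.zero_mem
    · exact W.smul_mem _ (Submodule.mem_map_of_mem (h_mem h_lt))
  have h_sum := W.add_mem h_lap h_shift
  rwa [add_assoc, ← add_smul, add_sub_cancel] at h_sum

theorem denseRange_smoothToL2_comp_polyToSmooth :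
    DenseRange (smoothToL2 d ∘ₗ polyToSmooth d) := by
  let coord (i : Fin d) : C(𝕊 d, ℝ) := ⟨fun θ => θ.1 i, by fun_prop⟩
  let A := (MvPolynomial.aeval coord : MvPolynomial (Fin d) ℝ →ₐ[ℝ] C(𝕊 d, ℝ)).range
  have h_separates : A.SeparatesPoints := by
    intro x y hxy
    obtain ⟨i, hi⟩ : ∃ i, x.1 i ≠ y.1 i := by
      by_contra! h
      exact hxy (Subtype.ext (PiLp.ext h))
    exact ⟨coord i, ⟨coord i, ⟨MvPolynomial.X i, MvPolynomial.aeval_X _ i⟩, rfl⟩, hi⟩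
  have h_eq : ⇑(smoothToContinuousMap d ∘ₗ polyToSmooth d) = MvPolynomial.aeval coord := by
    funext p
    ext θ
    exact (MvPolynomial.comp_aeval_apply coord (ContinuousMap.evalAlgHom ℝ ℝ θ) p).symm
  have h_dense : DenseRange (smoothToContinuousMap d ∘ₗ polyToSmooth d) := by
    have h_top := ContinuousMap.subalgebra_topologicalClosure_eq_top_of_separatesPoints A
      h_separates
    rw [h_eq, DenseRange, ← AlgHom.coe_range, dense_iff_closure_eq,
      ← Subalgebra.topologicalClosure_coe, h_top, Algebra.coe_top]
  exact (ContinuousMap.toLp_denseRange ℝ (sphMeasure d) ℝ (by simp)).comp h_dense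
    (ContinuousLinearMap.continuous _)

theorem dense_iSup_map_polyDegreeLT :
    ⊤ ≤ (⨆ n, ((polyDegreeLT (Fin d) ℝ n).map (polyToSmooth d)).map
      (smoothToL2 d)).topologicalClosure := by
  rw [← Submodule.map_iSup, ← Submodule.map_iSup, iSup_polyDegreeLT, ← Submodule.map_comp,
    Submodule.map_top, top_le_iff, ← Submodule.dense_iff_topologicalClosure_eq_top]
  exact denseRange_smoothToL2_comp_polyToSmooth

theorem integral_add_mul_mul_add_mul_nonneg {F : 𝕊 d → ℝ} (hF : SphSmooth F) {a b : ℝ}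
    (hab : ∀ n : ℕ, 0 ≤ (n * (n + d - 2) - a) * (n * (n + d - 2) - b)) :
    0 ≤ ∫ θ, (sphLap F θ + a * F θ) * (sphLap F θ + b * F θ) ∂sphMeasure d := by
  let G : smoothFunctions d := ⟨F, hF⟩
  have h_inner : 0 ≤ ⟪smoothToL2 d (smoothSphLap d G) + a • smoothToL2 d G,
      smoothToL2 d (smoothSphLap d G) + b • smoothToL2 d G⟫ :=
    inner_apply_add_smul_nonneg (V := fun n => (polyDegreeLT (Fin d) ℝ n).map (polyToSmooth d))
      inner_smoothToL2_smoothSphLap (by rw [polyDegreeLT_zero, Submodule.map_bot])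
      (fun _ _ h => Submodule.map_mono (polyDegreeLT_mono h))
      smoothSphLap_add_smul_mem_map_polyDegreeLT dense_iSup_map_polyDegreeLT hab G
  rwa [← map_smul, ← map_smul, ← map_add, ← map_add, inner_smoothToL2] at h_inner

theorem eigenvalue_sub_mul_eigenvalue_sub_nonneg (d n : ℕ) :
    0 ≤ ((n : ℝ) * (n + d - 2) - (d - 1)) * (n * (n + d - 2) - 2 * d) := by
  have h_int (m : ℤ) : 0 ≤ (m : ℝ) * (m - 1) := by
    rw [mul_sub_one, ← sq, sub_nonneg]
    exact_mod_cast Int.le_self_sq m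
  have h_mul := mul_nonneg (h_int (n - 1)) (h_int (n + d))
  push_cast at h_mul
  linear_combination h_mul

theorem sphere_poincare_lambda12_general (d : ℕ)
    (F : Metric.sphere (0 : EuclideanSpace ℝ (Fin d)) 1 → ℝ) (hF : SphSmooth F) :
    0 ≤ (∫ θ, (sphLap F θ + ((d : ℝ) - 1) * F θ) ^ 2 ∂(sphMeasure d))
        - ((d : ℝ) + 1) *
          (∫ θ, F θ * (-sphLap F θ - ((d : ℝ) - 1) * F θ) ∂(sphMeasure d)) := by
  have h_cont : Continuous F := hF.continuous
  have h_cont_lap : Continuous (sphLap F) := hF.sphLap.continuous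
  have h_int {g : 𝕊 d → ℝ} (hg : Continuous g) : Integrable g (sphMeasure d) :=
    hg.integrable_of_hasCompactSupport (.of_compactSpace g)
  rw [← integral_const_mul, ← integral_sub (h_int (by fun_prop)) (h_int (by fun_prop))]
  convert integral_add_mul_mul_add_mul_nonneg hF (eigenvalue_sub_mul_eigenvalue_sub_nonneg d)
    using 3 with θ
  ring

end Sphere

/-- If `d ≥ 2` and `F` is a smooth function on `𝕊^{d-1}` with mean zero,
then `0 ≤ ‖ΔF + (d−1)F‖² − (d+1)⟨F, −ΔF − (d−1)F⟩`. -/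
theorem sphere_poincare_lambda12 (d : ℕ) (hd : 2 ≤ d)
    (F : Metric.sphere (0 : EuclideanSpace ℝ (Fin d)) 1 → ℝ)
    (hF : SphSmooth F)
    (hmean : (∫ θ, F θ ∂(sphMeasure d)) = 0) :
    0 ≤ (∫ θ, (sphLap F θ + ((d : ℝ) - 1) * F θ) ^ 2 ∂(sphMeasure d))
        - ((d : ℝ) + 1) *
          (∫ θ, F θ * (-sphLap F θ - ((d : ℝ) - 1) * F θ) ∂(sphMeasure d)) :=
  sphere_poincare_lambda12_general d F hF
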